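/- If the matrix M has rank 3 (M ∈ GL₃(k)), then for every n ≥ 1 every cocycle of degree n is a coboundary, i.e. Zⁿ ⊆ Bⁿ; consequently the cohomology of (A, ∂) is concentrated in degree 0, where it equals k. -/

import Mathlib

/-!
The squares `xᵢ²` are central, and `A` is free over the polynomial ring they generate, with basis
`1, x₁, x₂, x₃, x₂x₃, x₃x₁, x₁x₂, x₁x₂x₃`. If `M` is invertible, the elements `tᵢ = ∂(xᵢ)` are
linear coordinates on the same polynomial ring `S = k[t₁, t₂, t₃]`. Each `tᵢ` is a central cocycle
of even degree, so `∂` is `S`-linear, and on the basis above it is exactly the Koszul differential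
of the regular sequence `t₁, t₂, t₃` (`SkewKoszul.d_phi`). The Koszul complex is exact away from the
constants: by Euler's identity, the anticommutator of its differential with the exterior derivative
is multiplication by a positive number on each component of positive total degree, which is
invertible in characteristic zero (`SkewKoszul.koszul_exact`).

Freeness splits into two parts. The basis spans, compatibly with the grading, because its span
contains `1` and is stable under left multiplication by the generators (`SkewKoszul.exists_coord`).
It is linearly independent because the formulas for left multiplication define an action of `A` on
`S⁸`, and an element acts on the coordinate vector of `1` by returning its own coordinates
(`SkewKoszul.phi_injective`).

In degree `0` every element is a scalar, hence a cocycle, and the augmentation `A → k` shows `1 ≠ 0`.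
-/

noncomputable section

/-- The skew-commutation relations `xᵢxⱼ + xⱼxᵢ = 0` (`i ≠ j`) among the three generators. -/
inductive SkewRel (k : Type) [Field k] :
    FreeAlgebra k (Fin 3) → FreeAlgebra k (Fin 3) → Prop
  | r01 : SkewRel k
      (FreeAlgebra.ι k 0 * FreeAlgebra.ι k 1 + FreeAlgebra.ι k 1 * FreeAlgebra.ι k 0) 0
  | r12 : SkewRel k
      (FreeAlgebra.ι k 1 * FreeAlgebra.ι k 2 + FreeAlgebra.ι k 2 * FreeAlgebra.ι k 1) 0
  | r20 : SkewRel k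
      (FreeAlgebra.ι k 2 * FreeAlgebra.ι k 0 + FreeAlgebra.ι k 0 * FreeAlgebra.ι k 2) 0

/-- The graded skew polynomial algebra `A = k⟨x₁,x₂,x₃⟩/(x₁x₂+x₂x₁, x₂x₃+x₃x₂, x₃x₁+x₁x₃)`. -/
abbrev SkewAlg (k : Type) [Field k] := RingQuot (SkewRel k)

/-- The generators `x₁, x₂, x₃` of `A` (indexed by `0, 1, 2`). -/
def X (k : Type) [Field k] (i : Fin 3) : SkewAlg k :=
  RingQuot.mkAlgHom k (SkewRel k) (FreeAlgebra.ι k i)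

/-- The degree-`n` homogeneous component `Aⁿ` of `A`: the `n`-th power of the span of the
generators (the algebra `A` is generated in degree `1` by `x₁,x₂,x₃`, and the defining
relations are homogeneous). -/
def deg (k : Type) [Field k] (n : ℕ) : Submodule k (SkewAlg k) :=
  (Submodule.span k {X k 0, X k 1, X k 2}) ^ n

/-- A differential on `A` determined by a matrix `M ∈ M₃(k)`: a `k`-linear map of degree `1`
squaring to zero, satisfying the graded Leibniz rule, with
`∂(xᵢ) = mᵢ₁x₁² + mᵢ₂x₂² + mᵢ₃x₃²`. -/
structure DGDiff (k : Type) [Field k] (M : Matrix (Fin 3) (Fin 3) k) where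
  d : SkewAlg k →ₗ[k] SkewAlg k
  grade : ∀ n : ℕ, ∀ a ∈ deg k n, d a ∈ deg k (n + 1)
  dd : ∀ a : SkewAlg k, d (d a) = 0
  leibniz : ∀ n : ℕ, ∀ a ∈ deg k n, ∀ b : SkewAlg k,
    d (a * b) = d a * b + ((-1 : k) ^ n) • (a * d b)
  dX : ∀ i : Fin 3,
    d (X k i) = M i 0 • (X k 0) ^ 2 + M i 1 • (X k 1) ^ 2 + M i 2 • (X k 2) ^ 2

/-- `Zⁿ`, the space of cocycles of degree `n`. -/
def cocycle (k : Type) [Field k] {M : Matrix (Fin 3) (Fin 3) k} (D : DGDiff k M) (n : ℕ) :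
    Submodule k (SkewAlg k) :=
  LinearMap.ker D.d ⊓ deg k n

/-- `Bⁿ`, the space of coboundaries of degree `n` (`B⁰ = 0`, `Bⁿ⁺¹ = ∂(Aⁿ)`). -/
def cobound (k : Type) [Field k] {M : Matrix (Fin 3) (Fin 3) k} (D : DGDiff k M) :
    ℕ → Submodule k (SkewAlg k)
  | 0 => ⊥
  | n + 1 => (deg k n).map D.d


namespace SkewKoszul

open MvPolynomial

/-- The variables of the polynomial ring, as opposed to the generators `X k i` of the algebra. -/
local notation "𝐭" => MvPolynomial.X

/-- The polynomial ring on three variables `t₀, t₁, t₂`, which stand for the central elements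
`∂(x₁), ∂(x₂), ∂(x₃)` (and not for the squares `xᵢ²`). -/
abbrev P (k : Type) [Field k] := MvPolynomial (Fin 3) k

/-- Polynomials of internal degree `j`, each variable having degree `2`. The degree is an
integer so that shifted degrees such as `n - 3` need no truncation. -/
abbrev H (k : Type) [Field k] (j : ℤ) : Submodule k (P k) :=
  weightedHomogeneousSubmodule k (fun _ => (2 : ℤ)) j

/-- The degree of the `j`-th basis element
`1, x₁, x₂, x₃, x₂x₃, x₃x₁, x₁x₂, x₁x₂x₃`. -/
def q : Fin 8 → ℤ := ![0, 1, 1, 1, 2, 2, 2, 3]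

/-- Coordinate vectors of total degree `n`. -/
def Hom (k : Type) [Field k] (n : ℤ) (c : Fin 8 → P k) : Prop :=
  ∀ j, c j ∈ H k (n - q j)

/-- The differential of the Koszul complex of `t₀, t₁, t₂`, with the four exterior degrees
collected in one vector: a pairing with `t`, a cross product with `t`, and a multiple of `t`. -/
def delta {k : Type} [Field k] (c : Fin 8 → P k) : Fin 8 → P k :=
  ![𝐭 0 * c 1 + 𝐭 1 * c 2 + 𝐭 2 * c 3,
    𝐭 2 * c 5 - 𝐭 1 * c 6, 𝐭 0 * c 6 - 𝐭 2 * c 4, 𝐭 1 * c 4 - 𝐭 0 * c 5,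
    𝐭 0 * c 7, 𝐭 1 * c 7, 𝐭 2 * c 7, 0]

/-! ### Exactness of the Koszul complex of the variables -/

section Koszul

variable {k : Type} [Field k]

lemma X_mem (i : Fin 3) : (𝐭 i : P k) ∈ H k 2 := isWeightedHomogeneous_X k _ i

lemma H_pderiv {j j' : ℤ} (h : j' + 2 = j) {p : P k} (hp : p ∈ H k j) (i : Fin 3) :
    pderiv i p ∈ H k j' :=
  IsWeightedHomogeneous.pderiv (w := fun _ : Fin 3 => (2 : ℤ)) hp h

lemma H_mul {i j l : ℤ} (h : i + j = l) {p r : P k} (hp : p ∈ H k i) (hr : r ∈ H k j) :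
    p * r ∈ H k l := by
  subst h
  exact IsWeightedHomogeneous.mul hp hr

lemma H_C_mul {j : ℤ} {p : P k} (a : k) (hp : p ∈ H k j) : C a * p ∈ H k j := by
  rw [← smul_eq_C_mul]
  exact Submodule.smul_mem _ _ hp

/-- Euler's identity, for integer degrees. -/
lemma euler {j : ℤ} {p : P k} (hp : p ∈ H k j) :
    2 * (𝐭 0 * pderiv 0 p + 𝐭 1 * pderiv 1 p + 𝐭 2 * pderiv 2 p) = C (j : k) * p := by
  have hsum : ∀ s : Finset (Fin 3 →₀ ℕ), (∀ m ∈ s, coeff m p ≠ 0) →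
      2 * (𝐭 0 * pderiv 0 (∑ m ∈ s, monomial m (coeff m p))
        + 𝐭 1 * pderiv 1 (∑ m ∈ s, monomial m (coeff m p))
        + 𝐭 2 * pderiv 2 (∑ m ∈ s, monomial m (coeff m p)))
      = C (j : k) * ∑ m ∈ s, monomial m (coeff m p) := by
    intro s hs
    simp only [map_sum, Finset.mul_sum, ← Finset.sum_add_distrib]
    refine Finset.sum_congr rfl fun m hm => ?_
    have hw := hp (hs m hm)
    simp only [Finsupp.weight_apply, Finsupp.sum_fintype, zero_smul, implies_true,
      Fin.sum_univ_three] at hw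
    have hj : (j : k) = 2 * ((m 0 : k) + m 1 + m 2) := by
      rw [← hw]; push_cast; simp; ring
    simp only [X_mul_pderiv_monomial, hj, map_mul, map_add, nsmul_eq_mul, map_natCast, map_ofNat]
    ring
  have := hsum p.support (fun m hm => mem_support_iff.mp hm)
  rwa [← p.as_sum] at this

/-- Exactness of the Koszul complex in positive degree. The primitive is the exterior derivative
of `c` (gradient, curl, divergence), divided on each exterior degree by the scalar by which the
anticommutator of `delta` with the exterior derivative acts; by Euler's identity this scalar is
`(n + 1 + q) / 2` on exterior degree `q`. -/
lemma koszul_exact [CharZero k] (n : ℕ) (c : Fin 8 → P k) (hc : Hom k (n + 1 : ℕ) c)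
    (hδ : delta c = 0) : ∃ b, Hom k n b ∧ delta b = c := by
  have h0 : 𝐭 0 * c 1 + 𝐭 1 * c 2 + 𝐭 2 * c 3 = 0 := by simpa [delta] using congrFun hδ 0
  have h1 : 𝐭 2 * c 5 - 𝐭 1 * c 6 = 0 := by simpa [delta] using congrFun hδ 1
  have h2 : 𝐭 0 * c 6 - 𝐭 2 * c 4 = 0 := by simpa [delta] using congrFun hδ 2
  have h3 : 𝐭 1 * c 4 - 𝐭 0 * c 5 = 0 := by simpa [delta] using congrFun hδ 3
  have h7 : c 7 = 0 := by simpa [delta] using congrFun hδ 4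
  have d0 := fun i => congrArg (pderiv i) h0
  have d1 := fun i => congrArg (pderiv i) h1
  have d2 := fun i => congrArg (pderiv i) h2
  have d3 := fun i => congrArg (pderiv i) h3
  have e := fun j => euler (hc j)
  -- the scalar `(n + 1 + q) / 2`, up to the factor `2`, for `q = a`
  have inv : ∀ a : ℕ, C (1 / ((n : k) + (a + 1))) * (C (n : k) + (C (a : k) + 1)) = (1 : P k) := by
    intro a
    have : (n : k) + (a + 1) ≠ 0 := by exact_mod_cast Nat.succ_ne_zero (n + a)
    rw [← C_1, ← C_add, ← C_add, ← C_mul, one_div_mul_cancel this]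
  have i0 := inv 0
  have i1 := inv 1
  have i2 := inv 2
  generalize hR0 : (1 / ((n : k) + ((0 : ℕ) + 1))) = r0 at i0
  generalize hR1 : (1 / ((n : k) + ((1 : ℕ) + 1))) = r1 at i1
  generalize hR2 : (1 / ((n : k) + ((2 : ℕ) + 1))) = r2 at i2
  refine ⟨![0, C (2 * r0) * pderiv 0 (c 0), C (2 * r0) * pderiv 1 (c 0), C (2 * r0) * pderiv 2 (c 0),
    C (2 * r1) * (pderiv 1 (c 3) - pderiv 2 (c 2)),
    C (2 * r1) * (pderiv 2 (c 1) - pderiv 0 (c 3)),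
    C (2 * r1) * (pderiv 0 (c 2) - pderiv 1 (c 1)),
    C (2 * r2) * (pderiv 0 (c 4) + pderiv 1 (c 5) + pderiv 2 (c 6))], ?_, ?_⟩
  · have m0 : c 0 ∈ H k (n + 1) := by simpa [q] using hc 0
    have m1 : c 1 ∈ H k n := by simpa [q] using hc 1
    have m2 : c 2 ∈ H k n := by simpa [q] using hc 2
    have m3 : c 3 ∈ H k n := by simpa [q] using hc 3
    have m4 : c 4 ∈ H k (n - 1) := by have := hc 4; convert this using 2; simp [q]; ring
    have m5 : c 5 ∈ H k (n - 1) := by have := hc 5; convert this using 2; simp [q]; ring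
    have m6 : c 6 ∈ H k (n - 1) := by have := hc 6; convert this using 2; simp [q]; ring
    have g0 := fun i => H_pderiv (j' := (n : ℤ) - 1) (by ring) m0 i
    have g1 := fun i => H_pderiv (j' := (n : ℤ) - 2) (by ring) m1 i
    have g2 := fun i => H_pderiv (j' := (n : ℤ) - 2) (by ring) m2 i
    have g3 := fun i => H_pderiv (j' := (n : ℤ) - 2) (by ring) m3 i
    have g4 := fun i => H_pderiv (j' := (n : ℤ) - 3) (by ring) m4 i
    have g5 := fun i => H_pderiv (j' := (n : ℤ) - 3) (by ring) m5 i
    have g6 := fun i => H_pderiv (j' := (n : ℤ) - 3) (by ring) m6 i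
    intro j
    fin_cases j
    · exact Submodule.zero_mem _
    · exact H_C_mul _ (g0 0)
    · exact H_C_mul _ (g0 1)
    · exact H_C_mul _ (g0 2)
    · exact H_C_mul _ (Submodule.sub_mem _ (g3 1) (g2 2))
    · exact H_C_mul _ (Submodule.sub_mem _ (g1 2) (g3 0))
    · exact H_C_mul _ (Submodule.sub_mem _ (g2 0) (g1 1))
    · exact H_C_mul _ (Submodule.add_mem _ (Submodule.add_mem _ (g4 0) (g5 1)) (g6 2))
  · have hC2 : (C 2 : P k) = 2 := map_ofNat C 2
    have e0 := e 0
    have e1 := e 1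
    have e2 := e 2
    have e3 := e 3
    have e4 := e 4
    have e5 := e 5
    have e6 := e 6
    simp [q, hC2] at e0 e1 e2 e3 e4 e5 e6 i0 i1 i2
    have d00 := d0 0
    have d01 := d0 1
    have d02 := d0 2
    have d11 := d1 1
    have d12 := d1 2
    have d20 := d2 0
    have d22 := d2 2
    have d30 := d3 0
    have d31 := d3 1
    simp [pderiv_X] at d00 d01 d02 d11 d12 d20 d22 d30 d31
    ext1 j
    fin_cases j <;> simp [delta, h7, hC2]
    · linear_combination C r0 * e0 + c 0 * i0
    · linear_combination C r1 * e1 - 2 * C r1 * d00 + c 1 * i1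
    · linear_combination C r1 * e2 - 2 * C r1 * d01 + c 2 * i1
    · linear_combination C r1 * e3 - 2 * C r1 * d02 + c 3 * i1
    · linear_combination C r2 * e4 - 2 * C r2 * (d31 - d22) + c 4 * i2
    · linear_combination C r2 * e5 - 2 * C r2 * (d12 - d30) + c 5 * i2
    · linear_combination C r2 * e6 - 2 * C r2 * (d20 - d11) + c 6 * i2

end Koszul
/-! ### The free module model of the algebra -/

section Model

variable {S A : Type*} [CommRing S] [Ring A] [Algebra S A]

/-- The basis `1, x₁, x₂, x₃, x₂x₃, x₃x₁, x₁x₂, x₁x₂x₃` over the central polynomial ring. -/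
def E (x : Fin 3 → A) : Fin 8 → A :=
  ![1, x 0, x 1, x 2, x 1 * x 2, x 2 * x 0, x 0 * x 1, x 0 * (x 1 * x 2)]

/-- The element of the algebra with given coordinates. -/
def phi (x : Fin 3 → A) : (Fin 8 → S) →ₗ[S] A := Fintype.linearCombination S (E x)

lemma phi_apply (x : Fin 3 → A) (c : Fin 8 → S) :
    phi x c = c 0 • (1 : A) + c 1 • x 0 + c 2 • x 1 + c 3 • x 2 + c 4 • (x 1 * x 2)
      + c 5 • (x 2 * x 0) + c 6 • (x 0 * x 1) + c 7 • (x 0 * (x 1 * x 2)) := by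
  simp [phi, Fintype.linearCombination_apply, Fin.sum_univ_eight, E]

/-- Anticommuting elements whose squares are the central elements `y i`. -/
structure Rel (x : Fin 3 → A) (y : Fin 3 → S) : Prop where
  sq : ∀ i, x i * x i = y i • (1 : A)
  r01 : x 1 * x 0 = -(x 0 * x 1)
  r12 : x 2 * x 1 = -(x 1 * x 2)
  r20 : x 0 * x 2 = -(x 2 * x 0)

/-- Left multiplication by the generators, written in the coordinates of `E`. -/
def L (y : Fin 3 → S) : Fin 3 → Module.End S (Fin 8 → S) :=
  ![{ toFun := fun c => ![y 0 * c 1, c 0, y 0 * c 6, -(y 0 * c 5), y 0 * c 7, -c 3, c 2, c 4]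
      map_add' := fun a b => by ext j; fin_cases j <;> simp <;> ring
      map_smul' := fun r a => by ext j; fin_cases j <;> simp <;> ring },
    { toFun := fun c => ![y 1 * c 2, -(y 1 * c 6), c 0, y 1 * c 4, c 3, y 1 * c 7, -c 1, c 5]
      map_add' := fun a b => by ext j; fin_cases j <;> simp <;> ring
      map_smul' := fun r a => by ext j; fin_cases j <;> simp <;> ring },
    { toFun := fun c => ![y 2 * c 3, y 2 * c 5, -(y 2 * c 4), c 0, -c 2, c 1, y 2 * c 7, c 6]
      map_add' := fun a b => by ext j; fin_cases j <;> simp <;> ring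
      map_smul' := fun r a => by ext j; fin_cases j <;> simp <;> ring }]

lemma L_zero (y : Fin 3 → S) (c : Fin 8 → S) : L y 0 c =
    ![y 0 * c 1, c 0, y 0 * c 6, -(y 0 * c 5), y 0 * c 7, -c 3, c 2, c 4] := rfl

lemma L_one (y : Fin 3 → S) (c : Fin 8 → S) : L y 1 c =
    ![y 1 * c 2, -(y 1 * c 6), c 0, y 1 * c 4, c 3, y 1 * c 7, -c 1, c 5] := rfl

lemma L_two (y : Fin 3 → S) (c : Fin 8 → S) : L y 2 c =
    ![y 2 * c 3, y 2 * c 5, -(y 2 * c 4), c 0, -c 2, c 1, y 2 * c 7, c 6] := rfl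

/-- The operators `L y i` satisfy the defining relations of the algebra, so they make the free
module of coordinates a module over it. -/
lemma rel_L (y : Fin 3 → S) : Rel (L y) y where
  sq i := by
    refine LinearMap.ext fun c => ?_
    fin_cases i <;> ext j <;> fin_cases j <;> simp [L_zero, L_one, L_two]
  r01 := by
    refine LinearMap.ext fun c => ?_
    ext j; fin_cases j <;> simp [L_zero, L_one, mul_left_comm]
  r12 := by
    refine LinearMap.ext fun c => ?_
    ext j; fin_cases j <;> simp [L_one, L_two, mul_left_comm]
  r20 := by
    refine LinearMap.ext fun c => ?_
    ext j; fin_cases j <;> simp [L_zero, L_two, mul_left_comm]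

lemma phi_L {x : Fin 3 → A} {y : Fin 3 → S} (h : Rel x y) (i : Fin 3) (c : Fin 8 → S) :
    phi x (L y i c) = x i * phi x c := by
  have s0 := h.sq 0
  have s1 := h.sq 1
  have s2 := h.sq 2
  have r01 := h.r01
  have r12 := h.r12
  have r20 := h.r20
  have s (i : Fin 3) (a : A) : x i * (x i * a) = y i • a := by
    rw [← mul_assoc, h.sq, smul_one_mul]
  have r01' (a : A) : x 1 * (x 0 * a) = -(x 0 * (x 1 * a)) := by
    rw [← mul_assoc, r01, neg_mul, mul_assoc]
  have r12' (a : A) : x 2 * (x 1 * a) = -(x 1 * (x 2 * a)) := by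
    rw [← mul_assoc, r12, neg_mul, mul_assoc]
  have r20' : x 2 * x 0 = -(x 0 * x 2) := by rw [r20, neg_neg]
  have r20'' (a : A) : x 2 * (x 0 * a) = -(x 0 * (x 2 * a)) := by
    rw [← mul_assoc, r20', neg_mul, mul_assoc]
  fin_cases i
  all_goals
    simp [phi_apply, L_zero, L_one, L_two, mul_add, s0, s1, s2, s, r01, r12, r20', r01', r12',
      r20'']
    module

/-- The vector `1`, acted on by the element with coordinates `c`, recovers `c`. -/
lemma phi_L_apply_one (y : Fin 3 → S) (c : Fin 8 → S) :
    phi (L y) c ![1, 0, 0, 0, 0, 0, 0, 0] = c := by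
  ext j
  rw [phi_apply]
  fin_cases j <;> simp [L_zero, L_one, L_two]

end Model


/-! ### Degrees and the differential in coordinates -/

section Graded

variable {k A : Type} [Field k] [Ring A] [Algebra (P k) A]

/-- Left multiplication by a generator raises the total degree by one. -/
lemma Hom.L {y : Fin 3 → P k} (hy : ∀ i, y i ∈ H k 2) {n : ℤ} {c : Fin 8 → P k}
    (hc : Hom k n c) (i : Fin 3) : Hom k (n + 1) (L y i c) := by
  have cc (j : Fin 8) {l : ℤ} (h : n - q j = l) : c j ∈ H k l := h ▸ hc j
  have yc (i : Fin 3) (j : Fin 8) {l : ℤ} (h : n - q j + 2 = l) : y i * c j ∈ H k l :=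
    H_mul (by rw [← h, add_comm]) (hy i) (hc j)
  intro j
  fin_cases i
  · fin_cases j
    · exact yc 0 1 (by simp [q]; try ring)
    · exact cc 0 (by simp [q]; try ring)
    · exact yc 0 6 (by simp [q]; try ring)
    · exact neg_mem (yc 0 5 (by simp [q]; try ring))
    · exact yc 0 7 (by simp [q]; try ring)
    · exact neg_mem (cc 3 (by simp [q]; try ring))
    · exact cc 2 (by simp [q]; try ring)
    · exact cc 4 (by simp [q]; try ring)
  · fin_cases j
    · exact yc 1 2 (by simp [q]; try ring)
    · exact neg_mem (yc 1 6 (by simp [q]; try ring))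
    · exact cc 0 (by simp [q]; try ring)
    · exact yc 1 4 (by simp [q]; try ring)
    · exact cc 3 (by simp [q]; try ring)
    · exact yc 1 7 (by simp [q]; try ring)
    · exact neg_mem (cc 1 (by simp [q]; try ring))
    · exact cc 5 (by simp [q]; try ring)
  · fin_cases j
    · exact yc 2 3 (by simp [q]; try ring)
    · exact yc 2 5 (by simp [q]; try ring)
    · exact neg_mem (yc 2 4 (by simp [q]; try ring))
    · exact cc 0 (by simp [q]; try ring)
    · exact neg_mem (cc 2 (by simp [q]; try ring))
    · exact cc 1 (by simp [q]; try ring)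
    · exact yc 2 7 (by simp [q]; try ring)
    · exact cc 6 (by simp [q]; try ring)

/-- In coordinates, a central-linear derivation sending each generator `x i` to the variable `t i`
is the Koszul differential; the central squares `y i` do not enter. -/
lemma d_phi {x : Fin 3 → A} {y : Fin 3 → P k} (h : Rel x y) {d : A → A} (hadd : ∀ a b, d (a + b) = d a + d b)
    (hsmul : ∀ (p : P k) a, d (p • a) = p • d a) (h1 : d 1 = 0)
    (hx : ∀ i a, d (x i * a) = (𝐭 i : P k) • a - x i * d a) (c : Fin 8 → P k) :
    d (phi x c) = phi x (delta c) := by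
  have hx1 (i : Fin 3) : d (x i) = (𝐭 i : P k) • (1 : A) := by
    simpa [h1] using hx i 1
  simp [phi_apply, delta, hadd, hsmul, h1, hx, hx1]
  simp only [mul_sub, mul_smul_comm, h.r20]
  module

variable [Algebra k A]

lemma X_pow_smul_mem {W : Submodule k A} (hW : ∀ i, (𝐭 i : P k) • (1 : A) ∈ W ^ 2) (i : Fin 3)
    (e : ℕ) {a : A} {l : ℕ} (ha : a ∈ W ^ l) : (𝐭 i ^ e : P k) • a ∈ W ^ (2 * e + l) := by
  induction e with
  | zero => simpa using ha
  | succ e ih =>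
    have h := Submodule.mul_mem_mul (hW i) ih
    rw [smul_one_mul, ← pow_add, smul_smul, ← pow_succ'] at h
    convert h using 2
    ring

variable [IsScalarTower k (P k) A]

lemma smul_mem_pow {W : Submodule k A} (hW : ∀ i, (𝐭 i : P k) • (1 : A) ∈ W ^ 2)
    {j : ℤ} {p : P k} (hp : p ∈ H k j) {a : A} {l n : ℕ} (ha : a ∈ W ^ l) (h : j + l = n) :
    p • a ∈ W ^ n := by
  rw [p.as_sum, Finset.sum_smul]
  refine Submodule.sum_mem _ fun m hm => ?_
  have hw := hp (mem_support_iff.mp hm)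
  rw [Finsupp.weight_apply, Finsupp.sum_fintype _ _ (by simp), Fin.sum_univ_three] at hw
  simp only [nsmul_eq_mul] at hw
  have hn : n = 2 * m 0 + (2 * m 1 + (2 * m 2 + l)) := by omega
  rw [hn, monomial_eq, Finsupp.prod_fintype _ _ (by simp), Fin.prod_univ_three, ← smul_eq_C_mul,
    smul_assoc, mul_assoc, mul_smul, mul_smul]
  exact Submodule.smul_mem _ _ (X_pow_smul_mem hW _ _ (X_pow_smul_mem hW _ _
    (X_pow_smul_mem hW _ _ ha)))

lemma phi_mem {W : Submodule k A} (hW : ∀ i, (𝐭 i : P k) • (1 : A) ∈ W ^ 2) {x : Fin 3 → A}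
    (hx : ∀ i, x i ∈ W) {n : ℕ} {c : Fin 8 → P k} (hc : Hom k n c) : phi x c ∈ W ^ n := by
  have x1 : ∀ i, x i ∈ W ^ 1 := by simpa using hx
  have x2 : ∀ i j, x i * x j ∈ W ^ 2 := fun i j => by
    rw [pow_two]; exact Submodule.mul_mem_mul (hx i) (hx j)
  have x3 : ∀ i j l, x i * (x j * x l) ∈ W ^ 3 := fun i j l => by
    rw [pow_succ']; exact Submodule.mul_mem_mul (hx i) (x2 j l)
  have x0 : (1 : A) ∈ W ^ 0 := by rw [pow_zero]; exact Submodule.one_le.mp le_rfl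
  rw [phi_apply]
  refine add_mem (add_mem (add_mem (add_mem (add_mem (add_mem (add_mem ?_ ?_) ?_) ?_) ?_) ?_) ?_) ?_
  · exact smul_mem_pow hW (hc 0) x0 (by simp [q])
  · exact smul_mem_pow hW (hc 1) (x1 0) (by simp [q])
  · exact smul_mem_pow hW (hc 2) (x1 1) (by simp [q])
  · exact smul_mem_pow hW (hc 3) (x1 2) (by simp [q])
  · exact smul_mem_pow hW (hc 4) (x2 1 2) (by simp [q])
  · exact smul_mem_pow hW (hc 5) (x2 2 0) (by simp [q])
  · exact smul_mem_pow hW (hc 6) (x2 0 1) (by simp [q])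
  · exact smul_mem_pow hW (hc 7) (x3 0 1 2) (by simp [q])

/-- The basis `E x` spans, compatibly with degrees. -/
lemma exists_coord {x : Fin 3 → A} {y : Fin 3 → P k} (h : Rel x y) (hy : ∀ i, y i ∈ H k 2)
    {n : ℕ} {a : A} (ha : a ∈ Submodule.span k {x 0, x 1, x 2} ^ n) :
    ∃ c, Hom k n c ∧ phi x c = a := by
  induction ha using Submodule.pow_induction_on_left' with
  | algebraMap r =>
    refine ⟨![C r, 0, 0, 0, 0, 0, 0, 0], ?_, ?_⟩
    · intro j
      fin_cases j
      · exact isWeightedHomogeneous_C _ r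
      all_goals exact Submodule.zero_mem _
    · simp [phi_apply, C_eq_smul_one, Algebra.algebraMap_eq_smul_one]
  | add a b i _ _ iha ihb =>
    obtain ⟨c, hc, rfl⟩ := iha
    obtain ⟨c', hc', rfl⟩ := ihb
    exact ⟨c + c', fun j => add_mem (hc j) (hc' j), map_add _ _ _⟩
  | mem_mul m hm i a _ ih =>
    obtain ⟨c, hc, rfl⟩ := ih
    obtain ⟨r, s, t, rfl⟩ := Submodule.mem_span_triple.mp hm
    refine ⟨(C r : P k) • L y 0 c + (C s : P k) • L y 1 c + (C t : P k) • L y 2 c, fun j => ?_, ?_⟩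
    · have hL := fun i => hc.L hy i j
      push_cast
      exact add_mem (add_mem (H_C_mul r (hL 0)) (H_C_mul s (hL 1))) (H_C_mul t (hL 2))
    · have e (r : k) (b : A) : (C r : P k) • b = r • b := by
        rw [C_eq_smul_one, smul_assoc, one_smul]
      simp only [map_add, map_smul, phi_L h, e, add_mul, smul_mul_assoc]

/-- Exactness in positive degree, for any algebra on anticommuting generators `x i` that is free
with basis `E x` over central variables `t i`, the degree `2` coboundaries of the `x i`. -/
theorem exact_of_free [CharZero k] {x : Fin 3 → A} {y : Fin 3 → P k} (h : Rel x y)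
    (hy : ∀ i, y i ∈ H k 2) (hinj : Function.Injective (phi x : (Fin 8 → P k) → A))
    (hW : ∀ i, (𝐭 i : P k) • (1 : A) ∈ Submodule.span k {x 0, x 1, x 2} ^ 2)
    {d : A → A} (hadd : ∀ a b, d (a + b) = d a + d b)
    (hsmul : ∀ (p : P k) a, d (p • a) = p • d a) (h1 : d 1 = 0)
    (hx : ∀ i a, d (x i * a) = (𝐭 i : P k) • a - x i * d a)
    {n : ℕ} {z : A} (hz : z ∈ Submodule.span k {x 0, x 1, x 2} ^ (n + 1)) (hdz : d z = 0) :
    ∃ b ∈ Submodule.span k {x 0, x 1, x 2} ^ n, d b = z := by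
  obtain ⟨c, hc, rfl⟩ := exists_coord h hy hz
  rw [d_phi h hadd hsmul h1 hx] at hdz
  obtain ⟨b, hb, rfl⟩ := koszul_exact n c hc (hinj (hdz.trans (map_zero _).symm))
  refine ⟨phi x b, phi_mem hW (fun i => Submodule.subset_span ?_) hb, d_phi h hadd hsmul h1 hx b⟩
  fin_cases i <;> simp

end Graded

/-! ### The skew polynomial algebra is free over a central polynomial ring -/

section Skew

variable {k : Type} [Field k]

lemma skew_induction {C : SkewAlg k → Prop} (hr : ∀ r, C (algebraMap k _ r))
    (hX : ∀ i, C (_root_.X k i)) (hmul : ∀ a b, C a → C b → C (a * b))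
    (hadd : ∀ a b, C a → C b → C (a + b)) (a : SkewAlg k) : C a := by
  obtain ⟨b, rfl⟩ := RingQuot.mkAlgHom_surjective k (SkewRel k) a
  induction b using FreeAlgebra.induction with
  | grade0 r => simpa using hr r
  | grade1 i => exact hX i
  | mul a b ha hb => rw [map_mul]; exact hmul _ _ ha hb
  | add a b ha hb => rw [map_add]; exact hadd _ _ ha hb

lemma X_anticomm {i j : Fin 3} (hij : i ≠ j) :
    _root_.X k i * _root_.X k j = -(_root_.X k j * _root_.X k i) := by
  have h01 := RingQuot.mkAlgHom_rel k (SkewRel.r01 (k := k))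
  have h12 := RingQuot.mkAlgHom_rel k (SkewRel.r12 (k := k))
  have h20 := RingQuot.mkAlgHom_rel k (SkewRel.r20 (k := k))
  simp only [map_add, map_mul, map_zero] at h01 h12 h20
  change _root_.X k 0 * _root_.X k 1 + _root_.X k 1 * _root_.X k 0 = 0 at h01
  change _root_.X k 1 * _root_.X k 2 + _root_.X k 2 * _root_.X k 1 = 0 at h12
  change _root_.X k 2 * _root_.X k 0 + _root_.X k 0 * _root_.X k 2 = 0 at h20
  apply eq_neg_of_add_eq_zero_left
  fin_cases i <;> fin_cases j <;> first | exact absurd rfl hij | skip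
  · exact h01
  · exact (add_comm _ _).trans h20
  · exact (add_comm _ _).trans h01
  · exact h12
  · exact h20
  · exact (add_comm _ _).trans h12

lemma sq_commute_of_anticomm {R : Type*} [Ring R] {a b : R} (h : a * b = -(b * a)) :
    Commute (a ^ 2) b := by
  change _ * _ = _ * _
  rw [pow_two, mul_assoc, h, mul_neg, ← mul_assoc, h, neg_mul, neg_neg, mul_assoc]

lemma X_sq_comm (i : Fin 3) (a : SkewAlg k) : Commute (_root_.X k i ^ 2) a := by
  induction a using skew_induction with
  | hr r => exact (Algebra.commutes r _).symm
  | hX j =>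
    by_cases hij : i = j
    · subst hij; exact (Commute.refl _).pow_left 2
    · exact sq_commute_of_anticomm (X_anticomm hij)
  | hmul a b ha hb => exact ha.mul_right hb
  | hadd a b ha hb => exact ha.add_right hb

lemma add_neg_one_pow_one_smul {V : Type*} [AddCommGroup V] [Module k V] (u v : V) :
    u + (-1 : k) ^ 1 • v = u - v := by
  rw [pow_one, neg_one_smul, sub_eq_add_neg]

/-- The central element `∂(xᵢ)` determined by the matrix `M`. -/
def dgen (M : Matrix (Fin 3) (Fin 3) k) (i : Fin 3) : SkewAlg k := ∑ j, M i j • _root_.X k j ^ 2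

lemma dgen_mem_center (M : Matrix (Fin 3) (Fin 3) k) (i : Fin 3) :
    dgen M i ∈ Subalgebra.center k (SkewAlg k) :=
  Subalgebra.sum_mem _ fun j _ => Subalgebra.smul_mem _
    (Subalgebra.mem_center_iff.mpr fun a => (X_sq_comm j a).symm) _

/-- Evaluation of polynomials at the central elements `∂(xᵢ)`. -/
def ev (M : Matrix (Fin 3) (Fin 3) k) : P k →ₐ[k] SkewAlg k :=
  (Subalgebra.center k (SkewAlg k)).val.comp
    (aeval fun i => (⟨dgen M i, dgen_mem_center M i⟩ : Subalgebra.center k (SkewAlg k)))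

lemma ev_X (M : Matrix (Fin 3) (Fin 3) k) (i : Fin 3) : ev M (𝐭 i) = dgen M i := by
  simp [ev]

lemma ev_comm (M : Matrix (Fin 3) (Fin 3) k) (p : P k) (a : SkewAlg k) :
    ev M p * a = a * ev M p :=
  (Subalgebra.mem_center_iff.mp (Subtype.property
    (aeval (fun i => (⟨dgen M i, dgen_mem_center M i⟩ : Subalgebra.center k (SkewAlg k))) p)) a).symm

/-- The squares `xᵢ²` as linear combinations of the variables `tⱼ = ∂(xⱼ)`, which uses the inverse
of `M`. -/
def sqPoly (M : Matrix (Fin 3) (Fin 3) k) (i : Fin 3) : P k := ∑ j, M⁻¹ i j • 𝐭 j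

lemma sqPoly_mem (M : Matrix (Fin 3) (Fin 3) k) (i : Fin 3) : sqPoly M i ∈ H k 2 :=
  Submodule.sum_mem _ fun j _ => Submodule.smul_mem _ _ (X_mem j)

lemma sum_smul_sum {V : Type*} [AddCommGroup V] [Module k V] {M N : Matrix (Fin 3) (Fin 3) k}
    (h : M * N = 1) (v : Fin 3 → V) (i : Fin 3) : ∑ j, M i j • ∑ l, N j l • v l = v i := by
  simp_rw [Finset.smul_sum, smul_smul]
  rw [Finset.sum_comm]
  simp_rw [← Finset.sum_smul, ← Matrix.mul_apply, h, Matrix.one_apply]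
  simp

lemma ev_sqPoly {M : Matrix (Fin 3) (Fin 3) k} (hM : IsUnit M.det) (i : Fin 3) :
    ev M (sqPoly M i) = _root_.X k i ^ 2 := by
  simp only [sqPoly, map_sum, map_smul, ev_X, dgen]
  exact sum_smul_sum (Matrix.nonsing_inv_mul M hM) (fun j => _root_.X k j ^ 2) i

/-- The algebra structure over the polynomial ring given by `ev M`. -/
abbrev centralAlgebra (M : Matrix (Fin 3) (Fin 3) k) : Algebra (P k) (SkewAlg k) :=
  RingHom.toAlgebra' (ev M : P k →+* SkewAlg k) (ev_comm M)

/-- The action of the algebra on coordinate vectors. -/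
def reg (M : Matrix (Fin 3) (Fin 3) k) : SkewAlg k →ₐ[k] Module.End (P k) (Fin 8 → P k) :=
  RingQuot.liftAlgHom k ⟨FreeAlgebra.lift k (L (sqPoly M)), by
    have h := rel_L (sqPoly M)
    intro a b hab
    cases hab
    · simp [h.r01]
    · simp [h.r12]
    · simp [h.r20]⟩

lemma reg_X (M : Matrix (Fin 3) (Fin 3) k) (i : Fin 3) :
    reg M (_root_.X k i) = L (sqPoly M) i := by
  simp [reg, _root_.X]

/-- Through the regular action the central element `∂(xᵢ)` acts as multiplication by the variable
`tᵢ`: this is the identity `M * M⁻¹ = 1`. -/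
lemma reg_ev {M : Matrix (Fin 3) (Fin 3) k} (hM : IsUnit M.det) (p : P k) :
    reg M (ev M p) = algebraMap (P k) (Module.End (P k) (Fin 8 → P k)) p := by
  have : (reg M).comp (ev M) = IsScalarTower.toAlgHom k (P k) _ := by
    refine algHom_ext fun i => ?_
    have e (j : Fin 3) : L (sqPoly M) j ^ 2
        = IsScalarTower.toAlgHom k (P k) (Module.End (P k) (Fin 8 → P k)) (sqPoly M j) := by
      rw [pow_two, (rel_L (sqPoly M)).sq, IsScalarTower.toAlgHom_apply,
        Algebra.algebraMap_eq_smul_one]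
    have e' := congrArg (IsScalarTower.toAlgHom k (P k) (Module.End (P k) (Fin 8 → P k)))
      (sum_smul_sum (Matrix.mul_nonsing_inv M hM) (𝐭 : Fin 3 → P k) i)
    rw [← e']
    simp only [AlgHom.comp_apply, ev_X, dgen, map_sum, map_smul, map_pow, reg_X, e]
    simp only [sqPoly, map_sum, map_smul]
  exact DFunLike.congr_fun this p

/-- The algebra is free over the central polynomial ring: acting on the coordinate vector of `1`
recovers the coordinates. -/
lemma phi_injective {M : Matrix (Fin 3) (Fin 3) k} (hM : IsUnit M.det) :
    letI := centralAlgebra M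
    Function.Injective (phi (_root_.X k) : (Fin 8 → P k) → SkewAlg k) := by
  let _ := centralAlgebra M
  intro c c' hcc
  have key (c : Fin 8 → P k) : reg M (phi (_root_.X k) c) = phi (L (sqPoly M)) c := by
    have hs (p : P k) (a : SkewAlg k) : reg M (p • a) = p • reg M a := by
      change reg M (ev M p * a) = _
      rw [map_mul, reg_ev hM, ← Algebra.smul_def]
    simp [phi_apply, hs, reg_X]
  rw [← phi_L_apply_one (sqPoly M) c, ← phi_L_apply_one (sqPoly M) c', ← key, ← key, hcc]

end Skew

/-! ### The given differential -/

section Differential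

variable {k : Type} [Field k] {M : Matrix (Fin 3) (Fin 3) k}

lemma X_mem_deg (i : Fin 3) : _root_.X k i ∈ deg k 1 := by
  rw [deg, pow_one]
  exact Submodule.subset_span (by fin_cases i <;> simp)

lemma dgen_mem_deg (i : Fin 3) : dgen M i ∈ deg k 2 :=
  Submodule.sum_mem _ fun j _ => Submodule.smul_mem _ _ <| by
    have h := X_mem_deg (k := k) j
    rw [deg, pow_one] at h
    exact Submodule.pow_mem_pow _ h 2

lemma d_X (D : DGDiff k M) (i : Fin 3) : D.d (_root_.X k i) = dgen M i := by
  rw [D.dX, dgen, Fin.sum_univ_three]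

lemma one_mem_deg : (1 : SkewAlg k) ∈ deg k 0 := by
  rw [deg, pow_zero]; exact Submodule.one_le.mp le_rfl

lemma d_one (D : DGDiff k M) : D.d 1 = 0 := by
  simpa using D.leibniz 0 1 one_mem_deg 1

/-- The differential is linear over the central polynomial ring, because each `∂(xᵢ)` is a cocycle
of even degree. -/
lemma d_ev_mul (D : DGDiff k M) (p : P k) (a : SkewAlg k) :
    D.d (ev M p * a) = ev M p * D.d a := by
  induction p using MvPolynomial.induction_on generalizing a with
  | C r =>
    have : ev M (C r) = algebraMap k _ r := (ev M).commutes r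
    simp [this, ← Algebra.smul_def]
  | add p r hp hr => simp [add_mul, hp, hr]
  | mul_X p i hp =>
    have h0 : D.d (dgen M i) = 0 := by rw [← d_X D, D.dd]
    simp [ev_X, mul_assoc, hp, D.leibniz 2 _ (dgen_mem_deg i), h0]

lemma cocycle_le (D : DGDiff k M) [CharZero k] (hM : IsUnit M.det) (n : ℕ) :
    cocycle k D (n + 1) ≤ cobound k D (n + 1) := by
  let _ := centralAlgebra M
  have : IsScalarTower k (P k) (SkewAlg k) := ⟨fun r p a => by
    change ev M (r • p) * a = r • (ev M p * a)
    rw [map_smul, smul_mul_assoc]⟩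
  have smul_eq (p : P k) (a : SkewAlg k) : p • a = ev M p * a := rfl
  have hrel : Rel (_root_.X k) (sqPoly M) :=
    { sq := fun i => by rw [smul_eq, ev_sqPoly hM, mul_one, pow_two]
      r01 := X_anticomm (by decide)
      r12 := X_anticomm (by decide)
      r20 := X_anticomm (by decide) }
  rintro z ⟨hdz, hz⟩
  obtain ⟨b, hb, hbz⟩ := exact_of_free (d := D.d) hrel (sqPoly_mem M) (phi_injective hM)
    (fun i => by rw [smul_eq, ev_X, mul_one]; exact dgen_mem_deg i) (map_add D.d)
    (fun p a => d_ev_mul D p a) (d_one D)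
    -- the sign `-1` in the Leibniz rule comes from `xᵢ` having odd degree
    (fun i a => by
      rw [D.leibniz 1 _ (X_mem_deg i), d_X, smul_eq, ev_X]
      exact add_neg_one_pow_one_smul (k := k) (V := SkewAlg k) _ _)
    hz hdz
  exact ⟨b, hb, hbz⟩

lemma isUnit_det_of_rank (h : M.rank = 3) : IsUnit M.det := by
  rw [← Matrix.isUnit_iff_isUnit_det, ← Matrix.linearIndependent_rows_iff_isUnit,
    linearIndependent_iff_card_eq_finrank_span, Set.finrank, ← Matrix.rank_eq_finrank_span_row, h]
  rfl

/-- The augmentation, which kills the generators. -/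
def augmentation (k : Type) [Field k] : SkewAlg k →ₐ[k] k :=
  RingQuot.liftAlgHom k ⟨FreeAlgebra.lift k 0, by
    intro a b hab
    cases hab <;> simp⟩

end Differential

end SkewKoszul

/-- If `M` has rank `3` (i.e. `M ∈ GL₃(k)`), then every cocycle of positive
degree is a coboundary (`Zⁿ ⊆ Bⁿ` for all `n ≥ 1`); consequently the cohomology of `(A, ∂)`
is concentrated in degree `0`, where it equals `k` (here `Z⁰ = A⁰` is one-dimensional and
`B⁰ = 0`). -/
theorem stmt11 (k : Type) [Field k] [IsAlgClosed k] [CharZero k]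
    (M : Matrix (Fin 3) (Fin 3) k) (D : DGDiff k M) (hrank : M.rank = 3) :
    (∀ n : ℕ, 1 ≤ n → cocycle k D n ≤ cobound k D n) ∧
      cocycle k D 0 = deg k 0 ∧ Module.finrank k (deg k 0) = 1 := by
  refine ⟨fun n hn => ?_, ?_, ?_⟩
  · obtain ⟨m, rfl⟩ := Nat.exists_eq_add_of_le' hn
    exact SkewKoszul.cocycle_le D (SkewKoszul.isUnit_det_of_rank hrank) m
  · refine inf_eq_right.mpr fun a ha => ?_
    rw [deg, pow_zero] at ha
    obtain ⟨r, rfl⟩ := Submodule.mem_one.mp ha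
    rw [LinearMap.mem_ker, Algebra.algebraMap_eq_smul_one, map_smul, SkewKoszul.d_one, smul_zero]
  · have : Nontrivial (SkewAlg k) := (SkewKoszul.augmentation k).domain_nontrivial
    rw [deg, pow_zero, Submodule.one_eq_span]
    exact finrank_span_singleton one_ne_zero
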